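/- For any finitely supported probability measures μ and ν on X, the (∞,1)-RPW distance equals the Lévy–Prokhorov distance: RPW_{∞,1}(μ, ν) = π(μ, ν). -/

import Mathlib

open MeasureTheory

noncomputable section

/-- `γ` is an `α`-partial transport plan from `μ` to `ν`: a Borel measure on `X × X` of
total mass `α` whose first marginal is dominated by `μ` and second marginal by `ν`. -/
def IsPartialPlan {X : Type*} [MeasurableSpace X] (μ ν : Measure X) (α : ℝ)
    (γ : Measure (X × X)) : Prop :=
  γ Set.univ = ENNReal.ofReal α ∧ γ.map Prod.fst ≤ μ ∧ γ.map Prod.snd ≤ ν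

/-- The `∞`-cost `w_∞(γ)` of a transport plan: the `γ`-essential supremum of the
distance `c(x, y)`. -/
def planCostInf {X : Type*} [MetricSpace X] [MeasurableSpace X]
    (γ : Measure (X × X)) : ℝ :=
  (essSup (fun z : X × X => ENNReal.ofReal (dist z.1 z.2)) γ).toReal

/-- The `α`-partial `∞`-Wasserstein distance `W_{∞,α}(μ, ν)`. -/
def partialWInf {X : Type*} [MetricSpace X] [MeasurableSpace X] (α : ℝ)
    (μ ν : Measure X) : ℝ :=
  sInf { c : ℝ | ∃ γ : Measure (X × X), IsPartialPlan μ ν α γ ∧ c = planCostInf γ }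

/-- The `(∞,k)`-RPW distance: the least `ε ∈ [0,1]` with `W_{∞,1-ε}(μ,ν) ≤ kε`. -/
def RPWInf {X : Type*} [MetricSpace X] [MeasurableSpace X] (k : ℝ)
    (μ ν : Measure X) : ℝ :=
  sInf { ε : ℝ | ε ∈ Set.Icc (0:ℝ) 1 ∧ partialWInf (1 - ε) μ ν ≤ k * ε }

/-- The Lévy–Prokhorov distance: the infimum of all `ε > 0` with
`μ(A) ≤ ν(A^ε) + ε` and `ν(A) ≤ μ(A^ε) + ε` for all Borel sets `A`, where
`A^ε = {x : c(x, A) < ε}` is the open `ε`-thickening of `A`. -/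
def LPdist {X : Type*} [MetricSpace X] [MeasurableSpace X] (μ ν : Measure X) : ℝ :=
  sInf { ε : ℝ | 0 < ε ∧ ∀ A : Set X, MeasurableSet A →
    μ A ≤ ν (Metric.thickening ε A) + ENNReal.ofReal ε ∧
    ν A ≤ μ (Metric.thickening ε A) + ENNReal.ofReal ε }

open Classical in
/-- Neighbourhood of a finite set under a relation. -/
def nbr {S T : Type*} [Fintype T] (R : S → T → Prop) (A : Finset S) : Finset T :=
  Finset.univ.filter fun t => ∃ s ∈ A, R s t

lemma mem_nbr {S T : Type*} [Fintype T] (R : S → T → Prop) (A : Finset S) (t : T) :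
    t ∈ nbr R A ↔ ∃ s ∈ A, R s t := by simp [nbr]

/-- Existence of a saturating fractional matching. -/
def HasFlow {S T : Type*} [Fintype S] [Fintype T] (R : S → T → Prop) (a : S → ℝ) (b : T → ℝ) :
    Prop :=
  ∃ g : S → T → ℝ, (∀ s t, 0 ≤ g s t) ∧ (∀ s t, g s t ≠ 0 → R s t) ∧
    (∀ s, ∑ t, g s t = a s) ∧ (∀ t, ∑ s, g s t ≤ b t)

lemma HasFlow.add {S T : Type*} [Fintype S] [Fintype T] {R : S → T → Prop} {a a' : S → ℝ}
    {b b' : T → ℝ} (h : HasFlow R a b) (h' : HasFlow R a' b') :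
    HasFlow R (fun s => a s + a' s) (fun t => b t + b' t) := by
  obtain ⟨g, h1, h2, h3, h4⟩ := h
  obtain ⟨g', h1', h2', h3', h4'⟩ := h'
  refine ⟨fun s t => g s t + g' s t, fun s t => add_nonneg (h1 s t) (h1' s t), ?_, ?_, ?_⟩
  · intro s t hst
    by_cases h0 : g s t = 0
    · apply h2'
      intro h0'
      apply hst
      simp [h0, h0']
    · exact h2 s t h0
  · intro s
    simp only [Finset.sum_add_distrib, h3, h3']
  · intro t
    simp only [Finset.sum_add_distrib]
    exact add_le_add (h4 t) (h4' t)

open Classical in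
lemma hasFlow_single {S T : Type*} [Fintype S] [Fintype T] {R : S → T → Prop} {s : S} {t : T}
    (h : R s t) {l : ℝ} (hl : 0 ≤ l) :
    HasFlow R (fun x => if x = s then l else 0) (fun y => if y = t then l else 0) := by
  refine ⟨fun x y => if x = s then (if y = t then l else 0) else 0, ?_, ?_, ?_, ?_⟩
  · intro x y; dsimp only; split_ifs <;> simp [hl]
  · intro x y hxy
    dsimp only at hxy
    split_ifs at hxy with h1 h2
    · subst h1 h2; exact h
    · simp at hxy
    · simp at hxy
  · intro x; by_cases hx : x = s <;> simp [hx]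
  · intro y; simp

open Classical in
/-- Number of nonzero entries. -/
def suppCard {S : Type*} [Fintype S] (a : S → ℝ) : ℕ := (Finset.univ.filter fun s => a s ≠ 0).card

lemma suppCard_le {S : Type*} [Fintype S] {a a' : S → ℝ} (h : ∀ s, a s = 0 → a' s = 0) :
    suppCard a' ≤ suppCard a := by
  unfold suppCard
  apply Finset.card_le_card
  intro s
  simp only [Finset.mem_filter, Finset.mem_univ, true_and]
  exact fun h1 h2 => h1 (h s h2)

lemma suppCard_lt {S : Type*} [Fintype S] {a a' : S → ℝ} (h : ∀ s, a s = 0 → a' s = 0)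
    (s : S) (hs : a s ≠ 0) (hs' : a' s = 0) :
    suppCard a' < suppCard a := by
  unfold suppCard
  apply Finset.card_lt_card
  refine ⟨?_, ?_⟩
  · intro s
    simp only [Finset.mem_filter, Finset.mem_univ, true_and]
    exact fun h1 h2 => h1 (h s h2)
  · intro hh
    have := @hh s (by simp [hs])
    simp [hs'] at this

open Classical in
/-- Splitting along a tight set. -/
lemma flow_split {S T : Type*} [Fintype S] [Fintype T] (R : S → T → Prop) (n : ℕ)
    (ih : ∀ (a : S → ℝ) (b : T → ℝ), suppCard a + suppCard b < n → (∀ s, 0 ≤ a s) →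
      (∀ t, 0 ≤ b t) → (∀ A, ∑ s ∈ A, a s ≤ ∑ t ∈ nbr R A, b t) → HasFlow R a b)
    (a : S → ℝ) (b : T → ℝ) (hn : suppCard a + suppCard b ≤ n) (ha : ∀ s, 0 ≤ a s)
    (hb : ∀ t, 0 ≤ b t) (hH : ∀ A, ∑ s ∈ A, a s ≤ ∑ t ∈ nbr R A, b t)
    (A : Finset S) (hA : ∑ s ∈ A, a s = ∑ t ∈ nbr R A, b t)
    (s : S) (t : T) (hs : a s ≠ 0) (hsA : s ∉ A) (ht : b t ≠ 0) (htA : t ∈ nbr R A) :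
    HasFlow R a b := by
  have h1 : HasFlow R (fun x => if x ∈ A then a x else 0)
      (fun y => if y ∈ nbr R A then b y else 0) := by
    apply ih
    · have h1 : suppCard (fun x => if x ∈ A then a x else 0) < suppCard a :=
        suppCard_lt (by intro x hx; simp [hx]) s hs (by simp [hsA])
      have h2 : suppCard (fun y => if y ∈ nbr R A then b y else 0) ≤ suppCard b :=
        suppCard_le (by intro x hx; simp [hx])
      omega
    · intro x; split_ifs <;> simp [ha]
    · intro x; split_ifs <;> simp [hb]
    · intro B
      rw [← Finset.sum_filter, ← Finset.sum_filter]
      refine (hH _).trans ?_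
      apply Finset.sum_le_sum_of_subset_of_nonneg
      · intro y
        simp only [Finset.mem_filter, mem_nbr]
        rintro ⟨x, ⟨h1, h2⟩, h3⟩
        exact ⟨⟨x, h1, h3⟩, ⟨x, h2, h3⟩⟩
      · intro y _ _; exact hb y
  have h2 : HasFlow R (fun x => if x ∉ A then a x else 0)
      (fun y => if y ∉ nbr R A then b y else 0) := by
    apply ih
    · have h1 : suppCard (fun x => if x ∉ A then a x else 0) ≤ suppCard a :=
        suppCard_le (by intro x hx; simp [hx])
      have h2 : suppCard (fun y => if y ∉ nbr R A then b y else 0) < suppCard b :=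
        suppCard_lt (by intro x hx; simp [hx]) t ht (by simp [htA])
      omega
    · intro x; split_ifs <;> simp [ha]
    · intro x; split_ifs <;> simp [hb]
    · intro B
      rw [← Finset.sum_filter, ← Finset.sum_filter]
      have e1 : ∑ x ∈ A ∪ B.filter (· ∉ A), a x = ∑ x ∈ A, a x + ∑ x ∈ B.filter (· ∉ A), a x := by
        apply Finset.sum_union
        rw [Finset.disjoint_left]
        intro x hx hx'
        exact (Finset.mem_filter.1 hx').2 hx
      have e2 : ∑ y ∈ nbr R A ∪ (nbr R B).filter (· ∉ nbr R A), b y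
          = ∑ y ∈ nbr R A, b y + ∑ y ∈ (nbr R B).filter (· ∉ nbr R A), b y := by
        apply Finset.sum_union
        rw [Finset.disjoint_left]
        intro x hx hx'
        exact (Finset.mem_filter.1 hx').2 hx
      have e3 : ∑ y ∈ nbr R (A ∪ B.filter (· ∉ A)), b y ≤
          ∑ y ∈ nbr R A ∪ (nbr R B).filter (· ∉ nbr R A), b y := by
        apply Finset.sum_le_sum_of_subset_of_nonneg
        · intro y hy
          rw [mem_nbr] at hy
          obtain ⟨x, hx, hxy⟩ := hy
          rw [Finset.mem_union, Finset.mem_filter]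
          by_cases hyA : y ∈ nbr R A
          · exact Or.inl hyA
          · refine Or.inr ⟨?_, hyA⟩
            rw [mem_nbr]
            rcases Finset.mem_union.1 hx with h | h
            · exact absurd ((mem_nbr R A y).2 ⟨x, h, hxy⟩) hyA
            · exact ⟨x, (Finset.mem_filter.1 h).1, hxy⟩
        · intro y _ _; exact hb y
      have e4 := hH (A ∪ B.filter (· ∉ A))
      linarith
  have h3 := h1.add h2
  convert h3 using 1
  · funext x; by_cases hx : x ∈ A <;> simp [hx]
  · funext x; by_cases hx : x ∈ nbr R A <;> simp [hx]

open Classical in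
theorem frac_hall {S T : Type*} [Fintype S] [Fintype T] (R : S → T → Prop) (n : ℕ) :
    ∀ (a : S → ℝ) (b : T → ℝ), suppCard a + suppCard b = n → (∀ s, 0 ≤ a s) →
      (∀ t, 0 ≤ b t) → (∀ A, ∑ s ∈ A, a s ≤ ∑ t ∈ nbr R A, b t) → HasFlow R a b := by
  induction n using Nat.strong_induction_on with
  | _ n ih0 =>
  have ih : ∀ (a : S → ℝ) (b : T → ℝ), suppCard a + suppCard b < n → (∀ s, 0 ≤ a s) →
      (∀ t, 0 ≤ b t) → (∀ A, ∑ s ∈ A, a s ≤ ∑ t ∈ nbr R A, b t) → HasFlow R a b :=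
    fun a b h => ih0 _ h a b rfl
  intro a b hn ha hb hH
  by_cases h0 : ∀ s, a s = 0
  · refine ⟨fun _ _ => 0, by simp, by simp, by simp [h0], by simpa using hb⟩
  push Not at h0
  obtain ⟨s, hs⟩ := h0
  obtain ⟨t, hst, ht⟩ : ∃ t, R s t ∧ b t ≠ 0 := by
    by_contra! hcon
    have h1 := hH {s}
    have h2 : ∑ t ∈ nbr R {s}, b t = 0 := by
      apply Finset.sum_eq_zero
      intro t ht
      rw [mem_nbr] at ht
      obtain ⟨x, hx, hxt⟩ := ht
      rw [Finset.mem_singleton] at hx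
      subst hx
      exact hcon t hxt
    rw [h2, Finset.sum_singleton] at h1
    exact hs (le_antisymm h1 (ha s))
  set F : Finset (Finset S) := Finset.univ.filter fun A => s ∉ A ∧ t ∈ nbr R A with hF
  set V : Finset ℝ := insert (a s) (insert (b t)
    (F.image fun A => ∑ y ∈ nbr R A, b y - ∑ x ∈ A, a x)) with hV
  have hVne : V.Nonempty := Finset.insert_nonempty _ _
  set l := V.min' hVne with hl
  have hlmem : l ∈ V := Finset.min'_mem _ _
  have hle : ∀ v ∈ V, l ≤ v := fun v hv => Finset.min'_le _ _ hv
  have hla : l ≤ a s := hle _ (by simp [hV])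
  have hlb : l ≤ b t := hle _ (by simp [hV])
  have hlF : ∀ A, s ∉ A → t ∈ nbr R A → l ≤ ∑ y ∈ nbr R A, b y - ∑ x ∈ A, a x := by
    intro A h1 h2
    apply hle
    simp only [hV, Finset.mem_insert, Finset.mem_image]
    exact Or.inr (Or.inr ⟨A, by simp [hF, h1, h2], rfl⟩)
  have hl0 : 0 ≤ l := by
    simp only [hV, Finset.mem_insert, Finset.mem_image] at hlmem
    rcases hlmem with h | h | ⟨A, _, h⟩
    · rw [h]; exact ha s
    · rw [h]; exact hb t
    · rw [← h]; linarith [hH A]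
  set a' : S → ℝ := fun x => a x - if x = s then l else 0 with ha'
  set b' : T → ℝ := fun y => b y - if y = t then l else 0 with hb'
  have sa : ∀ A : Finset S, ∑ x ∈ A, a' x = ∑ x ∈ A, a x - if s ∈ A then l else 0 := by
    intro A; simp [ha', Finset.sum_sub_distrib]
  have sb : ∀ A : Finset T, ∑ x ∈ A, b' x = ∑ x ∈ A, b x - if t ∈ A then l else 0 := by
    intro A; simp [hb', Finset.sum_sub_distrib]
  suffices h : HasFlow R a' b' by
    have := h.add (hasFlow_single hst hl0)
    simpa [ha', hb'] using this
  have hapos : ∀ x, 0 ≤ a' x := by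
    intro x; simp only [ha']; split_ifs with h
    · subst h; linarith
    · simpa using ha x
  have hbpos : ∀ x, 0 ≤ b' x := by
    intro x; simp only [hb']; split_ifs with h
    · subst h; linarith
    · simpa using hb x
  have hH' : ∀ A, ∑ s ∈ A, a' s ≤ ∑ t ∈ nbr R A, b' t := by
    intro A
    rw [sa, sb]
    have hA := hH A
    by_cases h1 : s ∈ A
    · have h2 : t ∈ nbr R A := (mem_nbr _ _ _).2 ⟨s, h1, hst⟩
      simp only [h1, h2, if_true]; linarith
    · by_cases h2 : t ∈ nbr R A
      · have := hlF A h1 h2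
        simp only [h1, h2, if_true, if_false]; linarith
      · simp only [h1, h2, if_false]; linarith
  have sa0 : ∀ x, a x = 0 → a' x = 0 := by
    intro x hx
    have : x ≠ s := by rintro rfl; exact hs hx
    simp [ha', hx, this]
  have sb0 : ∀ x, b x = 0 → b' x = 0 := by
    intro x hx
    have : x ≠ t := by rintro rfl; exact ht hx
    simp [hb', hx, this]
  have ca := suppCard_le sa0
  have cb := suppCard_le sb0
  by_cases has : a' s = 0
  · have := suppCard_lt sa0 s hs has
    exact ih a' b' (by omega) hapos hbpos hH'
  by_cases hbt : b' t = 0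
  · have := suppCard_lt sb0 t ht hbt
    exact ih a' b' (by omega) hapos hbpos hH'
  simp only [hV, Finset.mem_insert, Finset.mem_image] at hlmem
  rcases hlmem with h | h | ⟨A, hA, h⟩
  · exact absurd (by simp [ha', h]) has
  · exact absurd (by simp [hb', h]) hbt
  · simp only [hF, Finset.mem_filter, Finset.mem_univ, true_and] at hA
    refine flow_split R n ih a' b' (by omega) hapos hbpos hH' A ?_ s t has hA.1 hbt hA.2
    rw [sa, sb]
    simp only [hA.1, hA.2, if_true, if_false]
    linarith

/-- Deficit version. -/
theorem frac_hall_deficit {S T : Type*} [Fintype S] [Fintype T] (R : S → T → Prop)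
    (a : S → ℝ) (b : T → ℝ) (δ : ℝ) (hδ : 0 ≤ δ) (ha : ∀ s, 0 ≤ a s) (hb : ∀ t, 0 ≤ b t)
    (hH : ∀ A, ∑ s ∈ A, a s ≤ ∑ t ∈ nbr R A, b t + δ) :
    ∃ g : S → T → ℝ, (∀ s t, 0 ≤ g s t) ∧ (∀ s t, g s t ≠ 0 → R s t) ∧
    (∀ s, ∑ t, g s t ≤ a s) ∧ (∀ t, ∑ s, g s t ≤ b t) ∧ ∑ s, a s - δ ≤ ∑ s, ∑ t, g s t := by
  classical
  obtain ⟨g, h1, h2, h3, h4⟩ := frac_hall (T := Option T)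
    (fun s o => ∀ t, o = some t → R s t) _ a (fun o => o.elim δ b) rfl ha
    (by rintro (_ | t); exacts [hδ, hb t]) (by
      intro A
      rcases A.eq_empty_or_nonempty with rfl | ⟨x, hx⟩
      · simp [nbr]
      refine (hH A).trans (le_of_eq ?_)
      have : nbr (fun (s : S) (o : Option T) => ∀ t, o = some t → R s t) A
          = Finset.insertNone (nbr R A) := by
        ext o
        rcases o with _ | t
        · simp [mem_nbr]; exact ⟨x, hx⟩
        · simp [mem_nbr]
      rw [this, Finset.sum_insertNone]
      simp [add_comm])
  refine ⟨fun s t => g s (some t), fun s t => h1 _ _, fun s t h => h2 _ _ h t rfl, ?_, ?_, ?_⟩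
  · intro s
    have := h3 s
    rw [Fintype.sum_option] at this
    linarith [h1 s none]
  · intro t; exact h4 (some t)
  · have h5 := h4 none
    have h6 : ∑ s, a s = ∑ s, g s none + ∑ s, ∑ t, g s (some t) := by
      rw [← Finset.sum_add_distrib]
      apply Finset.sum_congr rfl
      intro s _
      rw [← h3 s, Fintype.sum_option]
    simp only [Option.elim] at h5
    linarith

lemma finite_supp_apply {X : Type*} [MeasurableSpace X] [MeasurableSingletonClass X]
    (μ : Measure X) (s : Finset X) (hs : μ (↑s : Set X)ᶜ = 0) (A : Set X) :
    μ A = ∑ x : s, μ {x.1} * A.indicator 1 x.1 := by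
  classical
  have h1 : μ A = μ (↑(s.filter (· ∈ A)) : Set X) := by
    apply measure_congr
    have : ∀ᵐ x ∂μ, x ∈ (↑s : Set X) := hs
    filter_upwards [this] with x hx
    apply propext
    change x ∈ A ↔ x ∈ (↑(s.filter (· ∈ A)) : Set X)
    simp at hx
    simp [hx]
  rw [h1, ← sum_measure_singleton, Finset.sum_filter, ← Finset.sum_coe_sort]
  apply Finset.sum_congr rfl
  intro x _
  by_cases hx : x.1 ∈ A <;> simp [hx]

lemma planCostInf_nonneg {X : Type*} [MetricSpace X] [MeasurableSpace X]
    (γ : Measure (X × X)) : 0 ≤ planCostInf γ := ENNReal.toReal_nonneg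

lemma partialWInf_le {X : Type*} [MetricSpace X] [MeasurableSpace X] (α : ℝ)
    (μ ν : Measure X) (γ : Measure (X × X)) (h : IsPartialPlan μ ν α γ) (c : ℝ) (hc : 0 ≤ c)
    (hγ : ∀ᵐ z ∂γ, dist z.1 z.2 ≤ c) : partialWInf α μ ν ≤ c := by
  refine le_trans (b := planCostInf γ) (csInf_le ⟨0, ?_⟩ ⟨γ, h, rfl⟩) ?_
  · rintro _ ⟨γ, _, rfl⟩; exact planCostInf_nonneg γ
  · unfold planCostInf
    apply ENNReal.toReal_le_of_le_ofReal hc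
    refine essSup_le_of_ae_le _ ?_
    filter_upwards [hγ] with z hz
    exact ENNReal.ofReal_le_ofReal hz

lemma one_mem_rpw {X : Type*} [MetricSpace X] [MeasurableSpace X] (μ ν : Measure X) :
    (1:ℝ) ∈ { ε : ℝ | ε ∈ Set.Icc (0:ℝ) 1 ∧ partialWInf (1 - ε) μ ν ≤ 1 * ε } := by
  refine ⟨by simp, ?_⟩
  rw [one_mul]
  refine partialWInf_le _ _ _ 0 ⟨by simp, ?_, ?_⟩ 1 zero_le_one (by simp)
  · simp [Measure.zero_le]
  · simp [Measure.zero_le]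

/-- One half of the Lévy–Prokhorov condition from a plan. -/
lemma lp_of_plan {X : Type*} [MetricSpace X] [MeasurableSpace X] [BorelSpace X]
    (μ ν : Measure X) [IsProbabilityMeasure μ] [IsProbabilityMeasure ν]
    (f g : X × X → X) (hf : Measurable f) (hg : Measurable g)
    (γ : Measure (X × X)) (ε η : ℝ) (h0 : 0 ≤ ε) (h1 : ε ≤ 1)
    (hγ : γ Set.univ = ENNReal.ofReal (1 - ε)) (hfm : γ.map f ≤ μ) (hgm : γ.map g ≤ ν)
    (hd : ∀ᵐ z ∂γ, dist (f z) (g z) < η) (hη : ε ≤ η) (A : Set X) (hA : MeasurableSet A) :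
    μ A ≤ ν (Metric.thickening η A) + ENNReal.ofReal η := by
  have hopen : MeasurableSet (Metric.thickening η A) := Metric.isOpen_thickening.measurableSet
  have e1 : γ (f ⁻¹' A) ≤ ν (Metric.thickening η A) := by
    calc γ (f ⁻¹' A) ≤ γ (g ⁻¹' (Metric.thickening η A)) := by
          apply measure_mono_ae
          filter_upwards [hd] with z hz hzA
          change g z ∈ Metric.thickening η A
          rw [Metric.mem_thickening_iff]
          exact ⟨f z, hzA, by rwa [dist_comm]⟩
      _ = γ.map g (Metric.thickening η A) := (Measure.map_apply hg hopen).symm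
      _ ≤ _ := hgm _
  have e2 : γ (f ⁻¹' Aᶜ) ≤ μ Aᶜ := by
    rw [← Measure.map_apply hf hA.compl]; exact hfm _
  have e3 : γ (f ⁻¹' A) + γ (f ⁻¹' Aᶜ) = ENNReal.ofReal (1 - ε) := by
    rw [← hγ, Set.preimage_compl]
    exact measure_add_measure_compl (hf hA)
  have e4 : μ A + μ Aᶜ = 1 := by
    rw [measure_add_measure_compl hA]; exact measure_univ
  have e5 : ENNReal.ofReal (1 - ε) + ENNReal.ofReal ε = 1 := by
    rw [← ENNReal.ofReal_add (by linarith) h0]; simp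
  have e6 : μ A ≤ γ (f ⁻¹' A) + ENNReal.ofReal ε := by
    have hne : μ Aᶜ ≠ ⊤ := measure_ne_top _ _
    rw [← ENNReal.add_le_add_iff_right hne, e4, ← e5, ← e3]
    calc γ (f ⁻¹' A) + γ (f ⁻¹' Aᶜ) + ENNReal.ofReal ε
        ≤ γ (f ⁻¹' A) + μ Aᶜ + ENNReal.ofReal ε := by gcongr
      _ = _ := by ring
  exact e6.trans (add_le_add e1 (ENNReal.ofReal_le_ofReal hη))

lemma LP_le_RPW {X : Type*} [MetricSpace X] [CompactSpace X] [MeasurableSpace X] [BorelSpace X]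
    (hdiam : ∀ a b : X, dist a b ≤ 1)
    (μ ν : Measure X) [IsProbabilityMeasure μ] [IsProbabilityMeasure ν] :
    LPdist μ ν ≤ RPWInf 1 μ ν := by
  refine le_csInf ⟨1, one_mem_rpw μ ν⟩ ?_
  rintro ε ⟨⟨h0, h1⟩, hW⟩
  rw [one_mul] at hW
  apply le_of_forall_pos_le_add
  intro δ hδ
  have hlt : partialWInf (1 - ε) μ ν < ε + δ := by linarith
  obtain ⟨_, ⟨γ, hγ, rfl⟩, hc⟩ := exists_lt_of_csInf_lt (by
    refine ⟨_, (ENNReal.ofReal (1 - ε)) • μ.prod ν, ⟨?_, ?_, ?_⟩, rfl⟩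
    · simp
    · rw [Measure.map_smul, Measure.map_fst_prod]
      simp only [measure_univ, one_smul]
      intro A
      simp only [Measure.smul_apply, smul_eq_mul]
      exact mul_le_of_le_one_left (zero_le) (by simp [h0])
    · rw [Measure.map_smul, Measure.map_snd_prod]
      simp only [measure_univ, one_smul]
      intro A
      simp only [Measure.smul_apply, smul_eq_mul]
      exact mul_le_of_le_one_left (zero_le) (by simp [h0])) hlt
  have hfin : essSup (fun z : X × X => ENNReal.ofReal (dist z.1 z.2)) γ ≠ ⊤ := by
    refine ne_top_of_le_ne_top ENNReal.one_ne_top ?_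
    refine essSup_le_of_ae_le _ ?_
    exact Filter.Eventually.of_forall fun z => by simpa using hdiam z.1 z.2
  have hd : ∀ᵐ z ∂γ, dist z.1 z.2 < ε + δ := by
    filter_upwards [ENNReal.ae_le_essSup (μ := γ)
      (fun z : X × X => ENNReal.ofReal (dist z.1 z.2))] with z hz
    have := ENNReal.toReal_mono hfin hz
    rw [ENNReal.toReal_ofReal dist_nonneg] at this
    exact this.trans_lt hc
  refine csInf_le ⟨0, fun x hx => hx.1.le⟩ ⟨by linarith, fun A hA => ⟨?_, ?_⟩⟩
  · exact lp_of_plan μ ν _ _ measurable_fst measurable_snd γ ε _ h0 h1 hγ.1 hγ.2.1 hγ.2.2 hd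
      (by linarith) A hA
  · exact lp_of_plan ν μ _ _ measurable_snd measurable_fst γ ε _ h0 h1 hγ.1 hγ.2.2 hγ.2.1
      (by simpa only [dist_comm] using hd) (by linarith) A hA

lemma exists_plan {X : Type*} [MetricSpace X] [MeasurableSpace X] [BorelSpace X]
    (μ ν : Measure X) [IsProbabilityMeasure μ] [IsProbabilityMeasure ν]
    (s t : Finset X) (hs : μ (↑s : Set X)ᶜ = 0) (ht : ν (↑t : Set X)ᶜ = 0)
    (g : s → t → ℝ) (g0 : ∀ x y, 0 ≤ g x y) (ε : ℝ) (gR : ∀ x y, g x y ≠ 0 → dist x.1 y.1 < ε)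
    (gs : ∀ x, ∑ y, g x y ≤ μ.real {x.1}) (gt : ∀ y, ∑ x, g x y ≤ ν.real {y.1})
    (α : ℝ) (hα : ∑ x, ∑ y, g x y = α) :
    ∃ γ : Measure (X × X), IsPartialPlan μ ν α γ ∧ ∀ᵐ z ∂γ, dist z.1 z.2 ≤ ε := by
  classical
  let γ : Measure (X × X) := ∑ x : s, ∑ y : t, ENNReal.ofReal (g x y) • Measure.dirac (x.1, y.1)
  have hγ : ∀ B : Set (X × X), MeasurableSet B →
      γ B = ∑ x : s, ∑ y : t, ENNReal.ofReal (g x y) * B.indicator 1 (x.1, y.1) := by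
    intro B hB
    simp only [γ, Measure.finsetSum_apply, Measure.smul_apply, smul_eq_mul,
      Measure.dirac_apply' _ hB]
  refine ⟨γ, ⟨?_, ?_, ?_⟩, ?_⟩
  · rw [hγ _ MeasurableSet.univ, ← hα, ENNReal.ofReal_sum_of_nonneg
      (fun x _ => Finset.sum_nonneg fun y _ => g0 x y)]
    refine Finset.sum_congr rfl fun x _ => ?_
    rw [ENNReal.ofReal_sum_of_nonneg (fun y _ => g0 x y)]
    simp
  · refine Measure.le_iff.2 fun A hA => ?_
    rw [Measure.map_apply measurable_fst hA, hγ _ (measurable_fst hA), finite_supp_apply μ s hs A]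
    refine Finset.sum_le_sum fun x _ => ?_
    have : ∀ y : t, ((Prod.fst ⁻¹' A : Set (X × X)).indicator (1 : X × X → ENNReal) (x.1, y.1))
        = A.indicator 1 x.1 := by
      intro y; by_cases hx : x.1 ∈ A <;> simp [hx]
    simp only [this]
    rw [← Finset.sum_mul, ← ENNReal.ofReal_sum_of_nonneg (fun y _ => g0 x y)]
    gcongr
    exact ENNReal.ofReal_le_of_le_toReal (gs x)
  · refine Measure.le_iff.2 fun A hA => ?_
    rw [Measure.map_apply measurable_snd hA, hγ _ (measurable_snd hA), finite_supp_apply ν t ht A,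
      Finset.sum_comm]
    refine Finset.sum_le_sum fun y _ => ?_
    have : ∀ x : s, ((Prod.snd ⁻¹' A : Set (X × X)).indicator (1 : X × X → ENNReal) (x.1, y.1))
        = A.indicator 1 y.1 := by
      intro x; by_cases hx : y.1 ∈ A <;> simp [hx]
    simp only [this]
    rw [← Finset.sum_mul, ← ENNReal.ofReal_sum_of_nonneg (fun x _ => g0 x y)]
    gcongr
    exact ENNReal.ofReal_le_of_le_toReal (gt y)
  · change γ _ = 0
    simp only [γ, Measure.finsetSum_apply, Measure.smul_apply, smul_eq_mul]
    refine Finset.sum_eq_zero fun x _ => Finset.sum_eq_zero fun y _ => ?_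
    by_cases h : g x y = 0
    · simp [h]
    · rw [Measure.dirac_apply]
      simp [(gR x y h).le]

lemma RPW_le_of_LP {X : Type*} [MetricSpace X] [CompactSpace X] [MeasurableSpace X] [BorelSpace X]
    (μ ν : Measure X) [IsProbabilityMeasure μ] [IsProbabilityMeasure ν]
    (hμ : ∃ s : Finset X, μ (↑s : Set X)ᶜ = 0)
    (hν : ∃ s : Finset X, ν (↑s : Set X)ᶜ = 0) (ε : ℝ) (hε : 0 < ε)
    (hLP : ∀ A : Set X, MeasurableSet A →
      μ A ≤ ν (Metric.thickening ε A) + ENNReal.ofReal ε) : RPWInf 1 μ ν ≤ ε := by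
  classical
  have hbdd : BddBelow { ε : ℝ | ε ∈ Set.Icc (0:ℝ) 1 ∧ partialWInf (1 - ε) μ ν ≤ 1 * ε } :=
    ⟨0, fun x hx => hx.1.1⟩
  rcases le_or_gt 1 ε with h1 | h1
  · exact (csInf_le hbdd (one_mem_rpw μ ν)).trans h1
  refine csInf_le hbdd ⟨⟨hε.le, h1.le⟩, ?_⟩
  rw [one_mul]
  obtain ⟨s, hs⟩ := hμ
  obtain ⟨t, ht⟩ := hν
  have real_eq : ∀ (ρ : Measure X) [IsProbabilityMeasure ρ] (r : Finset X)
      (_ : ρ (↑r : Set X)ᶜ = 0) (A : Set X),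
      ρ.real A = ∑ x : r, if x.1 ∈ A then ρ.real {x.1} else 0 := by
    intro ρ _ r hr A
    unfold Measure.real
    rw [finite_supp_apply ρ r hr A, ENNReal.toReal_sum]
    · refine Finset.sum_congr rfl fun x _ => ?_
      by_cases hx : x.1 ∈ A <;> simp [hx]
    · intro x _
      by_cases hx : x.1 ∈ A <;> simp [hx]
  obtain ⟨g, g0, gR, gs, gt, gm⟩ := frac_hall_deficit
    (fun (x : s) (y : t) => dist x.1 y.1 < ε) (fun x => μ.real {x.1}) (fun y => ν.real {y.1}) ε
    hε.le (fun _ => measureReal_nonneg) (fun _ => measureReal_nonneg) (by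
      intro A
      have hA := hLP (Subtype.val '' (A : Set s)) (Set.Finite.measurableSet (Set.toFinite _))
      have hA' := ENNReal.toReal_mono (by finiteness) hA
      rw [ENNReal.toReal_add (by finiteness) (by finiteness), ENNReal.toReal_ofReal hε.le] at hA'
      change μ.real _ ≤ ν.real _ + ε at hA'
      rw [real_eq μ s hs, real_eq ν t ht] at hA'
      rw [← Finset.sum_filter, ← Finset.sum_filter] at hA'
      have f1 : Finset.univ.filter (fun x : s => x.1 ∈ Subtype.val '' (A : Set s)) = A := by
        ext x
        simp
      have f2 : Finset.univ.filter
          (fun y : t => y.1 ∈ Metric.thickening ε (Subtype.val '' (A : Set s)))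
          = nbr (fun (x : s) (y : t) => dist x.1 y.1 < ε) A := by
        ext y
        simp [mem_nbr, Metric.mem_thickening_iff, dist_comm]
      rw [f1, f2] at hA'
      exact hA')
  have hμ1 : ∑ x : s, μ.real {x.1} = 1 := by
    have := real_eq μ s hs Set.univ
    simpa using this.symm
  rw [hμ1] at gm
  set m := ∑ x, ∑ y, g x y with hm
  have hmpos : 0 < m := by linarith
  set c := (1 - ε) / m with hc
  have hc0 : 0 ≤ c := div_nonneg (by linarith) hmpos.le
  have hc1 : c ≤ 1 := (div_le_one hmpos).2 gm
  obtain ⟨γ, hγ, hd⟩ := exists_plan μ ν s t hs ht (fun x y => c * g x y)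
    (fun x y => mul_nonneg hc0 (g0 x y)) ε (fun x y h => gR x y (right_ne_zero_of_mul h))
    (fun x => by
      rw [← Finset.mul_sum]
      exact (mul_le_of_le_one_left (Finset.sum_nonneg fun y _ => g0 x y) hc1).trans (gs x))
    (fun y => by
      rw [← Finset.mul_sum]
      exact (mul_le_of_le_one_left (Finset.sum_nonneg fun x _ => g0 x y) hc1).trans (gt y))
    (1 - ε) (by
      simp only [← Finset.mul_sum]
      rw [← hm, hc]
      field_simp)
  exact partialWInf_le _ _ _ γ hγ ε hε.le hd

/-- For finitely supported probability measures `μ, ν` on a compact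
metric space of unit diameter, `RPW_{∞,1}(μ, ν)` equals the Lévy–Prokhorov distance. -/
theorem rpwInf_eq_levyProkhorov_of_finite_support
    {X : Type*} [MetricSpace X] [CompactSpace X] [MeasurableSpace X] [BorelSpace X]
    (hdiam : ∀ a b : X, dist a b ≤ 1)
    (μ ν : Measure X) [IsProbabilityMeasure μ] [IsProbabilityMeasure ν]
    (hμ : ∃ s : Finset X, μ (↑s : Set X)ᶜ = 0)
    (hν : ∃ s : Finset X, ν (↑s : Set X)ᶜ = 0) :
    RPWInf 1 μ ν = LPdist μ ν := by
  apply le_antisymm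
  · refine le_csInf ⟨1, one_pos, fun A _ => ⟨?_, ?_⟩⟩ ?_
    · exact prob_le_one.trans (by simp)
    · exact prob_le_one.trans (by simp)
    · rintro ε ⟨h0, h⟩
      exact RPW_le_of_LP μ ν hμ hν ε h0 fun A hA => (h A hA).1
  · exact LP_le_RPW hdiam μ ν
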